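/- The function f^(2) is well-defined on Ω (the pieces agree on the overlaps of the regions), belongs to C²(Ω), and its first-order partial derivatives are: f^(2)_1(x) = 0 on S_0 and on S_1, f^(2)_1(x) = (√n/β)·φ(x_2·e^{−τ(x)})·e^{−τ(x)} on S_2, and f^(2)_1(x) = (√n/β)·e^{−τ(x)} on S_3; and f^(2)_2(x) = 0 on S_0, f^(2)_2(x) = φ(x_2)/x_2 on S_1, f^(2)_2(x) = (1/x_2)·(φ(x_2) − φ(x_2·e^{−τ(x)})) + φ(x_2·e^{−τ(x)})·(√n/β)·e^{−τ(x)}·(τ(x) + 1) on S_2, and f^(2)_2(x) = (√n/β)·e^{−τ(x)}·(τ(x) + 1) on S_3. -/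

import Mathlib

open MeasureTheory

/-- `(ν, η)` solves the nonlinear system of Lemma `gamma` for initial value `x₁`, at
level `κ`. -/
def GammaSol (n : ℕ) (β κ x1 ν η : ℝ) : Prop :=
  κ / Real.sqrt n ≤ ν ∧ 0 ≤ η ∧
    -(β / Real.sqrt n) + (x1 + β / Real.sqrt n) * Real.exp (-η) +
        η * ν * Real.exp (-η) = 0 ∧
    ν * Real.exp (-η) = κ / Real.sqrt n

/-- `η` solves the hitting-time equation `β/√n - (x₁ + β/√n)e^{-η} - η x₂ e^{-η} = 0`. -/
def HitEq (n : ℕ) (β x1 x2 η : ℝ) : Prop :=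
  β / Real.sqrt n - (x1 + β / Real.sqrt n) * Real.exp (-η) -
      η * x2 * Real.exp (-η) = 0

/-- The smoothed indicator `φ^{(ℓ,u)}`. -/
noncomputable def phiSm (l u x : ℝ) : ℝ :=
  if x ≤ l then 0
  else if x ≤ (u + l) / 2 then
    (x - l) ^ 2 * (-(x - l) / (((u + l) / 2 - l) ^ 2 * (u - l)) +
      2 / (((u + l) / 2 - l) * (u - l)))
  else if x ≤ u then
    1 - (x - u) ^ 2 * ((x - u) / (((u + l) / 2 - u) ^ 2 * (u - l)) -
      2 / (((u + l) / 2 - u) * (u - l)))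
  else 1

/-!
The initial abscissa `x₁ = b (exp η - 1) - η x₂` from which the fluid path of height `x₂` hits
`{x₁ = 0}` at time `η` is strictly decreasing in `η` as long as `b exp η ≤ x₂`, that is, as long as
the path is at height at least `b = β / √n`. So on that branch `τ` is determined by its equation
and, away from the endpoint `b exp τ = x₂`, smooth by the implicit function theorem.

With `s = x₂ exp (-t)` the pieces of `f^(2)` combine, for `l = κ₁ / √n`, into
`∫_l^{x₂} φ(s)/s ds + 1_{x ≥ Γ^(κ₁)} ∫_l^{x₂ exp (-τ)} (1/b - 1/s) φ(s) ds`.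
Both integrands are `C¹`, because `φ` vanishes up to `l > 0`. The indicator causes no kink: `τ` is
smooth across `Γ^(κ₁)`, and just below that curve `x₂ exp (-τ) ≤ l`, so the second integral is zero
there anyway.
-/

open Real Set Filter Topology

theorem hasDerivAt_max_zero_pow (m : ℕ) (x : ℝ) :
    HasDerivAt (fun x : ℝ => max x 0 ^ (m + 2)) ((m + 2) * max x 0 ^ (m + 1)) x := by
  refine hasDerivAt_of_hasDerivAt_of_ne' (x := 0)
    (g := fun x : ℝ => (m + 2) * max x 0 ^ (m + 1)) (fun y hy => ?_) (by fun_prop) (by fun_prop) x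
  rcases hy.lt_or_gt with hneg | hpos
  · have hloc : (fun x : ℝ => max x 0 ^ (m + 2)) =ᶠ[𝓝 y] fun _ => 0 := by
      filter_upwards [Iio_mem_nhds hneg] with z hz
      simp [max_eq_right (mem_Iio.1 hz).le]
    simpa [max_eq_right hneg.le] using (hasDerivAt_const y (0 : ℝ)).congr_of_eventuallyEq hloc
  · have hloc : (fun x : ℝ => max x 0 ^ (m + 2)) =ᶠ[𝓝 y] fun x => x ^ (m + 2) := by
      filter_upwards [Ioi_mem_nhds hpos] with z hz
      rw [max_eq_left (mem_Ioi.1 hz).le]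
    simpa [max_eq_left hpos.le] using (hasDerivAt_pow (m + 2) y).congr_of_eventuallyEq hloc

theorem contDiff_max_zero_pow (m : ℕ) : ContDiff ℝ m fun x : ℝ => max x 0 ^ (m + 1) := by
  induction m with
  | zero => exact contDiff_zero.2 (by fun_prop)
  | succ m ih =>
    rw [Nat.cast_succ, contDiff_succ_iff_deriv]
    refine ⟨fun x => (hasDerivAt_max_zero_pow m x).differentiableAt, by simp, ?_⟩
    rw [funext fun x => (hasDerivAt_max_zero_pow m x).deriv]
    exact contDiff_const.mul ih

section Cutoff

variable {l u : ℝ}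

-- A spline is the sum of the truncated powers at its knots, weighted by the jumps there of its
-- second and third derivatives (over `2!` and `3!`).
theorem phiSm_eq_truncated_powers (h : l < u) (x : ℝ) :
    phiSm l u x = 4 / (u - l) ^ 2 * max (x - l) 0 ^ 2 - 4 / (u - l) ^ 3 * max (x - l) 0 ^ 3
      + 4 / (u - l) ^ 2 * max (x - (u + l) / 2) 0 ^ 2
      + 4 / (u - l) ^ 2 * max (x - u) 0 ^ 2 + 4 / (u - l) ^ 3 * max (x - u) 0 ^ 3 := by
  have hd : u - l ≠ 0 := by linarith
  have hleft : (u + l) / 2 - l = (u - l) / 2 := by ring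
  have hright : (u + l) / 2 - u = -((u - l) / 2) := by ring
  unfold phiSm
  rw [hleft, hright]
  split_ifs with h1 h2 h3
  · rw [max_eq_right (by linarith), max_eq_right (by linarith), max_eq_right (by linarith)]
    ring
  · rw [max_eq_left (by linarith), max_eq_right (by linarith), max_eq_right (by linarith)]
    field_simp
    ring
  · rw [max_eq_left (by linarith), max_eq_left (by linarith), max_eq_right (by linarith)]
    field_simp
    ring
  · rw [max_eq_left (by linarith), max_eq_left (by linarith), max_eq_left (by linarith)]
    field_simp
    ring

theorem contDiff_one_phiSm (h : l < u) : ContDiff ℝ 1 (phiSm l u) := by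
  rw [funext (phiSm_eq_truncated_powers h)]
  have hsq (a : ℝ) : ContDiff ℝ 1 fun x : ℝ => max (x - a) 0 ^ 2 :=
    (contDiff_max_zero_pow 1).comp (contDiff_id.sub contDiff_const)
  have hcube (a : ℝ) : ContDiff ℝ 1 fun x : ℝ => max (x - a) 0 ^ 3 :=
    ((contDiff_max_zero_pow 2).of_le one_le_two).comp (contDiff_id.sub contDiff_const)
  have := hsq l
  have := hcube l
  have := hsq ((u + l) / 2)
  have := hsq u
  have := hcube u
  fun_prop

theorem phiSm_of_le {x : ℝ} (h : x ≤ l) : phiSm l u x = 0 := if_pos h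

theorem phiSm_of_ge {x : ℝ} (hlu : l < u) (h : u ≤ x) : phiSm l u x = 1 := by
  rw [phiSm, if_neg (by linarith), if_neg (by linarith)]
  split_ifs with hx
  · simp [le_antisymm hx h]
  · rfl

end Cutoff

section Integrals

variable {φ : ℝ → ℝ} {l u y : ℝ}

theorem contDiff_integral {n : ℕ} (hφ : ContDiff ℝ n φ) (a : ℝ) :
    ContDiff ℝ (n + 1) fun y => ∫ s in a..y, φ s := by
  have hderiv (y : ℝ) := (hφ.continuous.integral_hasStrictDerivAt a y).hasDerivAt
  rw [contDiff_succ_iff_deriv]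
  refine ⟨fun y => (hderiv y).differentiableAt, by simp, ?_⟩
  rwa [funext fun y => (hderiv y).deriv]

theorem contDiff_div_id_of_eq_zero {n : WithTop ℕ∞} (hl : 0 < l) (hφ : ContDiff ℝ n φ)
    (hφ0 : ∀ s ≤ l, φ s = 0) : ContDiff ℝ n fun s => φ s / s := by
  refine contDiff_iff_contDiffAt.2 fun x => ?_
  rcases lt_or_ge x l with hx | hx
  · refine contDiffAt_const (c := (0 : ℝ)) |>.congr_of_eventuallyEq ?_
    filter_upwards [Iio_mem_nhds hx] with s hs
    rw [hφ0 s (mem_Iio.1 hs).le, zero_div]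
  · exact hφ.contDiffAt.div contDiffAt_id (hl.trans_le hx).ne'

theorem integral_eq_zero_of_eq_zero_of_le (hφ0 : ∀ s ≤ l, φ s = 0) (hy : y ≤ l) :
    ∫ s in l..y, φ s = 0 :=
  intervalIntegral.integral_zero_ae <| .of_forall fun s hs => hφ0 s (uIoc_of_ge hy ▸ hs).2

theorem integral_eq_of_eq_one_of_ge (hφ : Continuous φ) (hφ1 : ∀ s, u ≤ s → φ s = 1)
    (hy : u ≤ y) : ∫ s in l..y, φ s = (y - u) + ∫ s in l..u, φ s := by
  have htop : ∫ s in u..y, φ s = y - u := by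
    rw [intervalIntegral.integral_congr (g := fun _ => 1)
      fun s hs => hφ1 s (uIcc_of_le hy ▸ hs).1]
    simp
  rw [← htop, add_comm, intervalIntegral.integral_add_adjacent_intervals] <;>
    exact hφ.intervalIntegrable _ _

theorem mul_exp_neg_log_div {k : ℝ} (hy : 0 < y) (hk : 0 < k) : y * exp (-log (y / k)) = k := by
  rw [exp_neg, exp_log (div_pos hy hk)]
  field_simp

theorem le_mul_exp_neg_iff {k t : ℝ} : k ≤ y * exp (-t) ↔ k * exp t ≤ y := by
  rw [exp_neg, ← div_eq_mul_inv, le_div_iff₀ (exp_pos t)]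

theorem integral_comp_mul_exp_neg (hφ : Continuous φ) (hy : 0 < y) (a c : ℝ) :
    ∫ t in a..c, φ (y * exp (-t)) = ∫ s in y * exp (-c)..y * exp (-a), φ s / s := by
  have hpath (t : ℝ) : HasDerivAt (fun t => y * exp (-t)) (-(y * exp (-t))) t := by
    simpa using ((hasDerivAt_neg t).exp.const_mul y)
  have hne (t : ℝ) : y * exp (-t) ≠ 0 := (mul_pos hy (exp_pos _)).ne'
  have hcont : ContinuousOn (fun s => φ s / s) ((fun t => y * exp (-t)) '' uIcc a c) := by
    refine hφ.continuousOn.div continuousOn_id ?_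
    rintro _ ⟨t, -, rfl⟩
    exact hne t
  rw [intervalIntegral.integral_symm (y * exp (-a)),
    ← intervalIntegral.integral_comp_mul_deriv'' (f' := fun t => -(y * exp (-t))) (by fun_prop)
      (fun t _ => (hpath t).hasDerivWithinAt) (by fun_prop) hcont, ← intervalIntegral.integral_neg]
  refine intervalIntegral.integral_congr fun t _ => ?_
  simp [div_mul_cancel₀ _ (hne t)]

theorem integral_comp_mul_exp_neg_of_le_log (hu : 0 < u) (hφ1 : ∀ s, u ≤ s → φ s = 1)
    (hy : 0 < y) {T : ℝ} (hT0 : 0 ≤ T) (hT : T ≤ log (y / u)) :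
    ∫ t in 0..T, φ (y * exp (-t)) = T := by
  rw [intervalIntegral.integral_congr (g := fun _ => 1)]
  · simp
  intro t ht
  rw [uIcc_of_le hT0] at ht
  have hexp : exp t ≤ y / u := (le_log_iff_exp_le (div_pos hy hu)).1 (ht.2.trans hT)
  exact hφ1 _ (le_mul_exp_neg_iff.2 (by rwa [mul_comm, ← le_div_iff₀ hu]))

theorem integral_comp_mul_exp_neg_of_ge (hφ : Continuous φ) (hu : 0 < u)
    (hφ1 : ∀ s, u ≤ s → φ s = 1) (hy : u ≤ y) (T : ℝ) :
    ∫ t in 0..T, φ (y * exp (-t)) =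
      log (y / u) + ∫ t in log (y / u)..T, φ (y * exp (-t)) := by
  have hint (a c : ℝ) : IntervalIntegrable (fun t => φ (y * exp (-t))) volume a c :=
    (by fun_prop : Continuous _).intervalIntegrable a c
  rw [← intervalIntegral.integral_add_adjacent_intervals (hint 0 (log (y / u))) (hint _ T),
    integral_comp_mul_exp_neg_of_le_log hu hφ1 (hu.trans_le hy)
      (log_nonneg ((one_le_div hu).2 hy)) le_rfl]

end Integrals

section Hitting

variable {b k k' x y η : ℝ} {p : ℝ × ℝ}

/-- Solving the hitting-time equation for `x₁` instead of `η`: the fluid path started at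
`(hitStart b y η, y)` hits `{x₁ = 0}` at time `η`, where `b = β / √n`. -/
noncomputable def hitStart (b y η : ℝ) : ℝ := b * (exp η - 1) - η * y

/-- The hitting time `τ`, encoded as the root of `hitStart b p.2 η = p.1` on the branch
`b * exp η ≤ p.2` where `hitStart b p.2` decreases; a junk value where that branch has no root. -/
noncomputable def hitTime (b : ℝ) (p : ℝ × ℝ) : ℝ :=
  Function.invFunOn (hitStart b p.2) {η | b * exp η ≤ p.2} p.1

/-- The height `x₂ * exp (-τ(x))` of the fluid path started at `p` at its hitting time. -/
noncomputable def hitLevel (b : ℝ) (p : ℝ × ℝ) : ℝ := p.2 * exp (-hitTime b p)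

/-- The curve `Γ^(κ)` as a graph over `x₂`, where `k = κ / √n`: the point of height `y` from which
the fluid path hits `{x₁ = 0}` at height `k`, hence at time `log (y / k)`. -/
noncomputable def gammaCurve (b k y : ℝ) : ℝ := hitStart b y (log (y / k))

/-- The region `x ≥ Γ^(κ)`, where `k = κ / √n`. -/
def aboveCurve (b k : ℝ) : Set (ℝ × ℝ) := {p | k ≤ p.2 ∧ gammaCurve b k p.2 ≤ p.1}

/-- The region `x ≤ Γ^(κ)`, where `k = κ / √n`. It includes the strip `x₂ < k`. -/
def belowCurve (b k : ℝ) : Set (ℝ × ℝ) := {p | k ≤ p.2 → p.1 ≤ gammaCurve b k p.2}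

/-- The points at which the hitting-time equation has a simple root on its decreasing branch. -/
def transversalSet (b : ℝ) : Set (ℝ × ℝ) :=
  {p | b * exp (hitTime b p) < p.2 ∧ hitStart b p.2 (hitTime b p) = p.1}

theorem hitStart_zero_right (b y : ℝ) : hitStart b y 0 = 0 := by simp [hitStart]

theorem strictAntiOn_hitStart (hb : 0 < b) (y : ℝ) :
    StrictAntiOn (hitStart b y) {η | b * exp η ≤ y} := by
  intro s _ t ht hst
  have hexp : exp t - exp s < (t - s) * exp t := by
    have hlt : s - t + 1 < exp (s - t) := add_one_lt_exp (sub_ne_zero.2 hst.ne)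
    have hsplit : exp s = exp (s - t) * exp t := by rw [← exp_add, sub_add_cancel]
    rw [hsplit]
    nlinarith [exp_pos t]
  have hslope : b * (exp t - exp s) < (t - s) * y :=
    calc b * (exp t - exp s) < b * ((t - s) * exp t) := mul_lt_mul_of_pos_left hexp hb
      _ = (t - s) * (b * exp t) := by ring
      _ ≤ (t - s) * y := mul_le_mul_of_nonneg_left ht (sub_pos.2 hst).le
  simp only [hitStart]
  linarith

theorem hitTime_eq (hb : 0 < b) (hη : b * exp η ≤ p.2) (h : hitStart b p.2 η = p.1) :
    hitTime b p = η := by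
  have hex : ∃ t ∈ {t | b * exp t ≤ p.2}, hitStart b p.2 t = p.1 := ⟨η, hη, h⟩
  exact (strictAntiOn_hitStart hb p.2).injOn (Function.invFunOn_mem hex) hη
    ((Function.invFunOn_eq hex).trans h.symm)

theorem mul_exp_log_div_le (hb : 0 < b) (hbk : b ≤ k) (hy : k ≤ y) :
    b * exp (log (y / k)) ≤ y := by
  have hk : 0 < k := hb.trans_le hbk
  rw [exp_log (div_pos (hk.trans_le hy) hk), mul_div_left_comm]
  exact mul_le_of_le_one_right (hk.le.trans hy) ((div_le_one hk).2 hbk)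

theorem gammaCurve_self (hk : k ≠ 0) : gammaCurve b k k = 0 := by
  rw [gammaCurve, div_self hk, log_one, hitStart_zero_right]

theorem strictAntiOn_gammaCurve (hb : 0 < b) (hbk : b ≤ k) :
    StrictAntiOn (gammaCurve b k) (Ici k) := by
  intro y₁ hy₁ y₂ hy₂ hlt
  rw [mem_Ici] at hy₁ hy₂
  have hk : 0 < k := hb.trans_le hbk
  have hlog : log (y₁ / k) < log (y₂ / k) :=
    log_lt_log (div_pos (hk.trans_le hy₁) hk) (div_lt_div_of_pos_right hlt hk)
  have hnonneg : 0 ≤ log (y₁ / k) := log_nonneg ((one_le_div hk).2 hy₁)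
  calc hitStart b y₂ (log (y₂ / k))
      < hitStart b y₂ (log (y₁ / k)) :=
        strictAntiOn_hitStart hb y₂ ((mul_exp_log_div_le hb hbk hy₁).trans hlt.le)
          (mul_exp_log_div_le hb hbk hy₂) hlog
    _ ≤ hitStart b y₁ (log (y₁ / k)) :=
        sub_le_sub_left (mul_le_mul_of_nonneg_left hlt.le hnonneg) _

theorem aboveCurve_subset_aboveCurve (hb : 0 < b) (hbk : b ≤ k) (hkk' : k ≤ k') :
    aboveCurve b k' ⊆ aboveCurve b k := by
  rintro p ⟨hp, hp'⟩
  have hk : 0 < k := hb.trans_le hbk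
  have hp₂ : 0 < p.2 := hk.trans_le (hkk'.trans hp)
  have hlog : log (p.2 / k') ≤ log (p.2 / k) :=
    log_le_log (div_pos hp₂ (hk.trans_le hkk')) (div_le_div_of_nonneg_left hp₂.le hk hkk')
  refine ⟨hkk'.trans hp, le_trans ?_ hp'⟩
  exact (strictAntiOn_hitStart hb p.2).antitoneOn (mul_exp_log_div_le hb (hbk.trans hkk') hp)
    (mul_exp_log_div_le hb hbk (hkk'.trans hp)) hlog

theorem isClosed_aboveCurve (hk : 0 < k) : IsClosed (aboveCurve b k) := by
  have hhalf : IsClosed {p : ℝ × ℝ | k ≤ p.2} := isClosed_le continuous_const continuous_snd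
  refine hhalf.isClosed_le ?_ continuous_fst.continuousOn
  unfold gammaCurve hitStart
  have hne : ∀ p ∈ {p : ℝ × ℝ | k ≤ p.2}, p.2 / k ≠ 0 :=
    fun p hp => (div_pos (hk.trans_le hp) hk).ne'
  fun_prop (disch := assumption)

theorem mem_aboveCurve_of_le {ν : ℝ} (hb : 0 < b) (hbk : b ≤ k) (hkν : k ≤ ν)
    (hν : gammaCurve b k ν = x) (hνy : ν ≤ y) : (x, y) ∈ aboveCurve b k :=
  ⟨hkν.trans hνy, hν ▸ (strictAntiOn_gammaCurve hb hbk).antitoneOn hkν (hkν.trans hνy) hνy⟩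

theorem mem_belowCurve_of_le {ν : ℝ} (hb : 0 < b) (hbk : b ≤ k) (hkν : k ≤ ν)
    (hν : gammaCurve b k ν = x) (hyν : y ≤ ν) : (x, y) ∈ belowCurve b k :=
  fun hky => hν ▸ (strictAntiOn_gammaCurve hb hbk).antitoneOn hky hkν hyν

theorem mem_belowCurve_of_snd_le (hk : k ≠ 0) (hp₁ : p.1 ≤ 0) (hp₂ : p.2 ≤ k) :
    p ∈ belowCurve b k := by
  intro hkp
  rwa [hp₂.antisymm hkp, gammaCurve_self hk]

theorem hitTime_spec (hb : 0 < b) (hbk : b ≤ k) (hp : p ∈ aboveCurve b k) (hp₁ : p.1 ≤ 0) :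
    0 ≤ hitTime b p ∧ k * exp (hitTime b p) ≤ p.2 ∧ hitStart b p.2 (hitTime b p) = p.1 := by
  have hk : 0 < k := hb.trans_le hbk
  have hcont : Continuous (hitStart b p.2) := by
    unfold hitStart
    fun_prop
  obtain ⟨η, ⟨hη0, hηlog⟩, hη⟩ :=
    intermediate_value_Icc' (log_nonneg ((one_le_div hk).2 hp.1)) hcont.continuousOn
      ⟨hp.2, hp₁.trans_eq (hitStart_zero_right b p.2).symm⟩
  have hlevel : k * exp η ≤ p.2 := by
    rw [mul_comm, ← le_div_iff₀ hk]
    exact (le_log_iff_exp_le (div_pos (hk.trans_le hp.1) hk)).1 hηlog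
  have hbranch : b * exp η ≤ p.2 :=
    (mul_le_mul_of_nonneg_right hbk (exp_pos η).le).trans hlevel
  rw [hitTime_eq hb hbranch hη]
  exact ⟨hη0, hlevel, hη⟩

theorem isLeast_hitTime (hb : 0 < b) (hp : p ∈ aboveCurve b b) (hp₁ : p.1 ≤ 0) :
    IsLeast {η | 0 ≤ η ∧ hitStart b p.2 η = p.1} (hitTime b p) := by
  obtain ⟨hnonneg, hbranch, heq⟩ := hitTime_spec hb le_rfl hp hp₁
  refine ⟨⟨hnonneg, heq⟩, fun η hη => le_of_not_gt fun hlt => hlt.ne' ?_⟩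
  exact hitTime_eq hb ((mul_le_mul_of_nonneg_left (exp_le_exp.2 hlt.le) hb.le).trans hbranch) hη.2

theorem le_hitLevel (hb : 0 < b) (hbk : b ≤ k) (hp : p ∈ aboveCurve b k) (hp₁ : p.1 ≤ 0) :
    k ≤ hitLevel b p :=
  le_mul_exp_neg_iff.2 (hitTime_spec hb hbk hp hp₁).2.1

theorem hitLevel_eq_of_fst_eq_gammaCurve (hb : 0 < b) (hbk : b ≤ k) (hk : k ≤ p.2)
    (hp : p.1 = gammaCurve b k p.2) :
    hitLevel b p = k := by
  have hk0 : 0 < k := hb.trans_le hbk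
  rw [hitLevel, hitTime_eq hb (mul_exp_log_div_le hb hbk hk) hp.symm,
    mul_exp_neg_log_div (hk0.trans_le hk) hk0]

theorem hitLevel_le_of_notMem (hb : 0 < b) (hbk : b ≤ k) (hp : p ∈ transversalSet b)
    (hp₁ : p.1 ≤ 0) (hp₂ : b ≤ p.2) (hpk : p ∉ aboveCurve b k) : hitLevel b p ≤ k := by
  have hk : 0 < k := hb.trans_le hbk
  have hanti {η : ℝ} (hη : b * exp η ≤ p.2) (h : p.1 ≤ hitStart b p.2 η) : η ≤ hitTime b p :=
    ((strictAntiOn_hitStart hb p.2).le_iff_ge hp.1.le hη).1 (hp.2.trans_le h)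
  rcases lt_or_ge p.2 k with hlt | hge
  · have hnonneg : 0 ≤ hitTime b p :=
      hanti (by simpa using hp₂) (hp₁.trans_eq (hitStart_zero_right b p.2).symm)
    refine (mul_le_of_le_one_right (hb.le.trans hp₂) ?_).trans hlt.le
    exact exp_le_one_iff.2 (neg_nonpos.2 hnonneg)
  · have hlog : log (p.2 / k) ≤ hitTime b p :=
      hanti (mul_exp_log_div_le hb hbk hge) (le_of_not_ge fun h => hpk ⟨hge, h⟩)
    calc p.2 * exp (-hitTime b p) ≤ p.2 * exp (-log (p.2 / k)) :=
          mul_le_mul_of_nonneg_left (exp_le_exp.2 (neg_le_neg hlog)) (hb.le.trans hp₂)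
      _ = k := mul_exp_neg_log_div (hk.trans_le hge) hk

theorem mem_transversalSet (hb : 0 < b) (hbk : b < k) (hp : p ∈ aboveCurve b k) (hp₁ : p.1 ≤ 0) :
    p ∈ transversalSet b := by
  obtain ⟨-, hlevel, heq⟩ := hitTime_spec hb hbk.le hp hp₁
  exact ⟨(mul_lt_mul_of_pos_right hbk (exp_pos _)).trans_le hlevel, heq⟩

theorem indicator_aboveCurve_eq_zero {g : ℝ × ℝ → ℝ} (hb : 0 < b) (hbk : b ≤ k)
    (hp : p ∈ belowCurve b k) (hg : hitLevel b p = k → g p = 0) :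
    (aboveCurve b k).indicator g p = 0 :=
  indicator_apply_eq_zero.2 fun h =>
    hg (hitLevel_eq_of_fst_eq_gammaCurve hb hbk h.1 ((hp h.1).antisymm h.2))

theorem exists_contDiffAt_hitStart_eq (hη : b * exp η < p.2) (h : hitStart b p.2 η = p.1) :
    ∃ ψ : ℝ × ℝ → ℝ, ContDiffAt ℝ ⊤ ψ p ∧ ψ p = η ∧
      ∀ᶠ q in 𝓝 p, b * exp (ψ q) < q.2 ∧ hitStart b q.2 (ψ q) = q.1 := by
  let f : (ℝ × ℝ) × ℝ → ℝ := fun u => hitStart b u.1.2 u.2 - u.1.1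
  have hf : ContDiff ℝ ⊤ f := by
    unfold f hitStart
    fun_prop
  have hpartial : fderiv ℝ f (p, η) ∘L .inr ℝ (ℝ × ℝ) ℝ =
      ContinuousLinearMap.toSpanSingleton ℝ (b * exp η - p.2) := by
    have hderiv : HasDerivAt (fun t => f (p, t)) (b * exp η - p.2) η := by
      simpa [f, hitStart] using
        ((((hasDerivAt_exp η).sub_const 1).const_mul b).sub
          ((hasDerivAt_id η).mul_const p.2)).sub_const p.1
    exact ((hf.differentiable (by simp)).differentiableAt.hasFDerivAt.comp η
      (hasFDerivAt_prodMk_right p η)).unique hderiv.hasFDerivAt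
  have hinv : (fderiv ℝ f (p, η) ∘L .inr ℝ (ℝ × ℝ) ℝ).IsInvertible := by
    rw [hpartial]
    exact ⟨ContinuousLinearEquiv.unitsEquivAut ℝ (Units.mk0 _ (sub_neg.2 hη).ne), by ext; simp⟩
  have hcd : ContDiffAt ℝ ⊤ f (p, η) := hf.contDiffAt
  have hψ : ContDiffAt ℝ ⊤ (hcd.implicitFunction (by simp) hinv) p :=
    hcd.contDiffAt_implicitFunction (by simp) hinv
  have hψp : hcd.implicitFunction (by simp) hinv p = η :=
    hcd.implicitFunction_apply_self (by simp) hinv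
  refine ⟨_, hψ, hψp, Eventually.and ?_ ?_⟩
  · refine ContinuousAt.eventually_lt ?_ continuous_snd.continuousAt (by rwa [hψp])
    exact continuousAt_const.mul hψ.continuousAt.rexp
  · filter_upwards [hcd.eventually_apply_implicitFunction (by simp) hinv] with q hq
    simpa [f, h, sub_eq_zero] using hq

theorem contDiffAt_hitTime (hb : 0 < b) (hp : p ∈ transversalSet b) {n : WithTop ℕ∞} :
    ContDiffAt ℝ n (hitTime b) p := by
  obtain ⟨ψ, hψ, -, hev⟩ := exists_contDiffAt_hitStart_eq hp.1 hp.2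
  refine (hψ.of_le le_top).congr_of_eventuallyEq ?_
  filter_upwards [hev] with q hq using hitTime_eq hb hq.1.le hq.2

theorem transversalSet_mem_nhds (hb : 0 < b) (hp : p ∈ transversalSet b) :
    transversalSet b ∈ 𝓝 p := by
  obtain ⟨ψ, -, -, hev⟩ := exists_contDiffAt_hitStart_eq hp.1 hp.2
  filter_upwards [hev] with q hq
  rwa [← hitTime_eq hb hq.1.le hq.2] at hq

theorem hasFDerivAt_hitTime (hb : 0 < b) (hp : p ∈ transversalSet b) :
    HasFDerivAt (hitTime b) ((b * exp (hitTime b p) - p.2)⁻¹ •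
      (ContinuousLinearMap.fst ℝ ℝ ℝ + hitTime b p • ContinuousLinearMap.snd ℝ ℝ ℝ)) p := by
  obtain ⟨τ', hτ⟩ := (contDiffAt_hitTime hb hp (n := 1)).differentiableAt one_ne_zero
  have hcomp : HasFDerivAt (fun q => hitStart b q.2 (hitTime b q))
      (b • exp (hitTime b p) • τ' -
        (hitTime b p • ContinuousLinearMap.snd ℝ ℝ ℝ + p.2 • τ')) p :=
    ((hτ.exp.sub_const 1).const_mul b).sub (hτ.mul hasFDerivAt_snd)
  have hfst : HasFDerivAt (fun q => hitStart b q.2 (hitTime b q))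
      (ContinuousLinearMap.fst ℝ ℝ ℝ) p := by
    refine hasFDerivAt_fst.congr_of_eventuallyEq ?_
    filter_upwards [transversalSet_mem_nhds hb hp] with q hq using hq.2
  have hne : b * exp (hitTime b p) - p.2 ≠ 0 := (sub_neg.2 hp.1).ne
  refine hτ.congr_fderiv ?_
  rw [eq_inv_smul_iff₀ hne, ← hcomp.unique hfst]
  module

theorem hasFDerivAt_hitLevel (hb : 0 < b) (hp : p ∈ transversalSet b) :
    HasFDerivAt (hitLevel b) (exp (-hitTime b p) • (ContinuousLinearMap.snd ℝ ℝ ℝ -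
      (p.2 / (b * exp (hitTime b p) - p.2)) • (ContinuousLinearMap.fst ℝ ℝ ℝ +
        hitTime b p • ContinuousLinearMap.snd ℝ ℝ ℝ))) p := by
  refine (hasFDerivAt_snd.mul (hasFDerivAt_hitTime hb hp).neg.exp).congr_fderiv ?_
  rw [div_eq_mul_inv]
  module

end Hitting

section ValueFun

variable {φ : ℝ → ℝ} {b l u : ℝ} {p : ℝ × ℝ}

/-- The function `f^(2)` for a cutoff `φ` vanishing up to `l`. Substituting `s = x₂ * exp (-t)`
turns its defining integrals along the fluid path into integrals over levels `s`. -/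
noncomputable def valueFun (φ : ℝ → ℝ) (b l : ℝ) (p : ℝ × ℝ) : ℝ :=
  (∫ s in l..p.2, φ s / s) +
    (aboveCurve b l).indicator (fun q => ∫ s in l..hitLevel b q, (b⁻¹ * φ s - φ s / s)) p

/-- The partial derivative of `valueFun` in `x₁`. -/
noncomputable def valueFunFst (φ : ℝ → ℝ) (b l : ℝ) : ℝ × ℝ → ℝ :=
  (aboveCurve b l).indicator fun q => b⁻¹ * φ (hitLevel b q) * exp (-hitTime b q)

/-- The partial derivative of `valueFun` in `x₂`. -/
noncomputable def valueFunSnd (φ : ℝ → ℝ) (b l : ℝ) (p : ℝ × ℝ) : ℝ :=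
  φ p.2 / p.2 + (aboveCurve b l).indicator
    (fun q => (b⁻¹ * exp (-hitTime b q) * (hitTime b q + 1) - 1 / q.2) * φ (hitLevel b q)) p

theorem valueFun_of_mem_belowCurve (hb : 0 < b) (hbl : b ≤ l) (hp : p ∈ belowCurve b l) :
    valueFun φ b l p = ∫ s in l..p.2, φ s / s := by
  rw [valueFun, indicator_aboveCurve_eq_zero hb hbl hp fun h => ?_, add_zero]
  rw [h, intervalIntegral.integral_same]

theorem valueFunFst_of_mem_belowCurve (hb : 0 < b) (hbl : b ≤ l) (hφl : φ l = 0)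
    (hp : p ∈ belowCurve b l) : valueFunFst φ b l p = 0 :=
  indicator_aboveCurve_eq_zero hb hbl hp fun h => by rw [h, hφl, mul_zero, zero_mul]

theorem valueFunSnd_of_mem_belowCurve (hb : 0 < b) (hbl : b ≤ l) (hφl : φ l = 0)
    (hp : p ∈ belowCurve b l) : valueFunSnd φ b l p = φ p.2 / p.2 := by
  rw [valueFunSnd, indicator_aboveCurve_eq_zero hb hbl hp fun h => ?_, add_zero]
  rw [h, hφl, mul_zero]

theorem valueFun_of_mem_belowCurve_of_le (hφ : Continuous φ) (hb : 0 < b) (hbl : b ≤ l)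
    (hp : p ∈ belowCurve b l) (hlp : l ≤ p.2) :
    valueFun φ b l p = ∫ t in 0..log (p.2 / l), φ (p.2 * exp (-t)) := by
  have hl : 0 < l := hb.trans_le hbl
  have hp₂ : 0 < p.2 := hl.trans_le hlp
  rw [valueFun_of_mem_belowCurve hb hbl hp, integral_comp_mul_exp_neg hφ hp₂,
    mul_exp_neg_log_div hp₂ hl, neg_zero, exp_zero, mul_one]

theorem valueFun_of_mem_aboveCurve (hφ : ContDiff ℝ 1 φ) (hφ0 : ∀ s ≤ l, φ s = 0) (hl : 0 < l)
    (hp : p ∈ aboveCurve b l) :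
    valueFun φ b l p = (∫ t in 0..hitTime b p, φ (p.2 * exp (-t))) +
      b⁻¹ * ∫ s in l..hitLevel b p, φ s := by
  have hint (c d : ℝ) : IntervalIntegrable (fun s => φ s / s) volume c d :=
    (contDiff_div_id_of_eq_zero hl hφ hφ0).continuous.intervalIntegrable c d
  have hintφ : IntervalIntegrable (fun s => b⁻¹ * φ s) volume l (hitLevel b p) :=
    (hφ.continuous.const_mul b⁻¹).intervalIntegrable _ _
  rw [valueFun, indicator_of_mem hp, intervalIntegral.integral_sub hintφ (hint _ _),
    intervalIntegral.integral_const_mul, integral_comp_mul_exp_neg hφ.continuous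
      (hl.trans_le hp.1), neg_zero, exp_zero, mul_one, ← hitLevel,
    ← intervalIntegral.integral_add_adjacent_intervals (hint l (hitLevel b p)) (hint _ p.2)]
  ring

theorem valueFun_eventuallyEq_of_mem (hφ0 : ∀ s ≤ l, φ s = 0) (hb : 0 < b) (hbl : b < l)
    (hp : p ∈ aboveCurve b l) (hp₁ : p.1 ≤ 0) :
    valueFun φ b l =ᶠ[𝓝[{q | q.1 ≤ 0}] p] fun q =>
      (∫ s in l..q.2, φ s / s) + ∫ s in l..hitLevel b q, (b⁻¹ * φ s - φ s / s) := by
  have hgt : ∀ᶠ q in 𝓝 p, b < q.2 :=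
    continuousAt_snd.eventually (lt_mem_nhds (hbl.trans_le hp.1))
  filter_upwards [self_mem_nhdsWithin, mem_nhdsWithin_of_mem_nhds hgt,
    mem_nhdsWithin_of_mem_nhds (transversalSet_mem_nhds hb (mem_transversalSet hb hbl hp hp₁))]
    with q hq₁ hq₂ hqt
  rw [valueFun]
  congr 1
  refine indicator_apply_eq_self.2 fun hq => ?_
  exact integral_eq_zero_of_eq_zero_of_le (fun s hs => by simp [hφ0 s hs])
    (hitLevel_le_of_notMem hb hbl.le hqt hq₁ hq₂.le hq)

theorem valueFun_eventuallyEq_of_notMem (hl : 0 < l) (hp : p ∉ aboveCurve b l) :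
    valueFun φ b l =ᶠ[𝓝 p] fun q => ∫ s in l..q.2, φ s / s := by
  filter_upwards [(isClosed_aboveCurve hl).isOpen_compl.mem_nhds hp] with q hq
  rw [valueFun, indicator_of_notMem hq, add_zero]

theorem contDiffOn_valueFun (hφ : ContDiff ℝ 1 φ) (hφ0 : ∀ s ≤ l, φ s = 0) (hb : 0 < b)
    (hbl : b < l) : ContDiffOn ℝ 2 (valueFun φ b l) {p | p.1 ≤ 0} := by
  intro p hp₁
  have hl : 0 < l := hb.trans hbl
  have hdiv : ContDiff ℝ 1 fun s => φ s / s := contDiff_div_id_of_eq_zero hl hφ hφ0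
  have hsnd : ContDiffAt ℝ 2 (fun q : ℝ × ℝ => ∫ s in l..q.2, φ s / s) p :=
    ((contDiff_integral (n := 1) hdiv l).comp contDiff_snd).contDiffAt
  by_cases hp : p ∈ aboveCurve b l
  · have hτ : ContDiffAt ℝ 2 (hitTime b) p :=
      contDiffAt_hitTime hb (mem_transversalSet hb hbl hp hp₁)
    have hlevel : ContDiffAt ℝ 2 (hitLevel b) p := contDiffAt_snd.mul hτ.neg.exp
    have hint := contDiff_integral (n := 1) ((contDiff_const (c := b⁻¹)).mul hφ |>.sub hdiv) l
    have hsum := hsnd.add (hint.contDiffAt.comp p hlevel)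
    exact hsum.contDiffWithinAt.congr_of_eventuallyEq_of_mem
      (valueFun_eventuallyEq_of_mem hφ0 hb hbl hp hp₁) hp₁
  · exact (hsnd.congr_of_eventuallyEq (valueFun_eventuallyEq_of_notMem hl hp)).contDiffWithinAt

theorem hasFDerivAt_integral_hitLevel (hφ : ContDiff ℝ 1 φ) (hφ0 : ∀ s ≤ l, φ s = 0) (hb : 0 < b)
    (hbl : b < l) (hp : p ∈ aboveCurve b l) (hp₁ : p.1 ≤ 0) :
    HasFDerivAt (fun q => ∫ s in l..hitLevel b q, (b⁻¹ * φ s - φ s / s))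
      ((b⁻¹ * φ (hitLevel b p) * exp (-hitTime b p)) • ContinuousLinearMap.fst ℝ ℝ ℝ +
        ((b⁻¹ * exp (-hitTime b p) * (hitTime b p + 1) - 1 / p.2) * φ (hitLevel b p)) •
          ContinuousLinearMap.snd ℝ ℝ ℝ) p := by
  have hl : 0 < l := hb.trans hbl
  have hcont : Continuous fun s => b⁻¹ * φ s - φ s / s :=
    (hφ.continuous.const_mul b⁻¹).sub (contDiff_div_id_of_eq_zero hl hφ hφ0).continuous
  have ht : p ∈ transversalSet b := mem_transversalSet hb hbl hp hp₁
  have hp₂ : p.2 ≠ 0 := (hl.trans_le hp.1).ne'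
  have hslope : b * exp (hitTime b p) - p.2 ≠ 0 := (sub_neg.2 ht.1).ne
  have hE : exp (hitTime b p) ≠ 0 := exp_ne_zero _
  have hcoef_snd : (b⁻¹ * φ (hitLevel b p) - φ (hitLevel b p) / hitLevel b p) *
      exp (-hitTime b p) = (b⁻¹ * exp (-hitTime b p) - 1 / p.2) * φ (hitLevel b p) := by
    rw [hitLevel, exp_neg]
    field_simp
  have hcoef_fst : (b⁻¹ * exp (-hitTime b p) - 1 / p.2) * φ (hitLevel b p) *
      (p.2 / (b * exp (hitTime b p) - p.2)) =
        -(b⁻¹ * φ (hitLevel b p) * exp (-hitTime b p)) := by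
    rw [exp_neg]
    field_simp
    ring
  refine ((hcont.integral_hasStrictDerivAt l _).hasDerivAt.comp_hasFDerivAt p
    (hasFDerivAt_hitLevel hb ht)).congr_fderiv ?_
  rw [smul_smul, hcoef_snd, smul_sub, smul_smul, hcoef_fst]
  module

theorem hasFDerivWithinAt_valueFun (hφ : ContDiff ℝ 1 φ) (hφ0 : ∀ s ≤ l, φ s = 0) (hb : 0 < b)
    (hbl : b < l) (hp₁ : p.1 ≤ 0) :
    HasFDerivWithinAt (valueFun φ b l) (valueFunFst φ b l p • ContinuousLinearMap.fst ℝ ℝ ℝ +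
      valueFunSnd φ b l p • ContinuousLinearMap.snd ℝ ℝ ℝ) {q | q.1 ≤ 0} p := by
  have hl : 0 < l := hb.trans hbl
  have hdiv : Continuous fun s => φ s / s := (contDiff_div_id_of_eq_zero hl hφ hφ0).continuous
  have hsnd : HasFDerivAt (fun q : ℝ × ℝ => ∫ s in l..q.2, φ s / s)
      ((φ p.2 / p.2) • ContinuousLinearMap.snd ℝ ℝ ℝ) p :=
    (hdiv.integral_hasStrictDerivAt l p.2).hasDerivAt.comp_hasFDerivAt p hasFDerivAt_snd
  by_cases hp : p ∈ aboveCurve b l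
  · rw [valueFunFst, valueFunSnd, indicator_of_mem hp, indicator_of_mem hp]
    have hsum := hsnd.add (hasFDerivAt_integral_hitLevel hφ hφ0 hb hbl hp hp₁)
    have hev := valueFun_eventuallyEq_of_mem hφ0 hb hbl hp hp₁
    refine (hsum.hasFDerivWithinAt.congr_of_eventuallyEq hev
      (hev.eq_of_nhdsWithin hp₁)).congr_fderiv ?_
    module
  · rw [valueFunFst, valueFunSnd, indicator_of_notMem hp, indicator_of_notMem hp, zero_smul,
      zero_add, add_zero]
    exact (hsnd.congr_of_eventuallyEq (valueFun_eventuallyEq_of_notMem hl hp)).hasFDerivWithinAt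

theorem hasDerivWithinAt_valueFun_fst (hφ : ContDiff ℝ 1 φ) (hφ0 : ∀ s ≤ l, φ s = 0) (hb : 0 < b)
    (hbl : b < l) (hp₁ : p.1 ≤ 0) :
    HasDerivWithinAt (fun t => valueFun φ b l (t, p.2)) (valueFunFst φ b l p) (Iic 0) p.1 := by
  have hline : HasDerivWithinAt (fun t => (t, p.2)) ((1 : ℝ), (0 : ℝ)) (Iic 0) p.1 :=
    (hasDerivWithinAt_id ..).prodMk (hasDerivWithinAt_const ..)
  simpa [Function.comp_def] using
    (hasFDerivWithinAt_valueFun hφ hφ0 hb hbl hp₁).comp_hasDerivWithinAt p.1 hline fun _ ht => ht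

theorem hasDerivAt_valueFun_snd (hφ : ContDiff ℝ 1 φ) (hφ0 : ∀ s ≤ l, φ s = 0) (hb : 0 < b)
    (hbl : b < l) (hp₁ : p.1 ≤ 0) :
    HasDerivAt (fun t => valueFun φ b l (p.1, t)) (valueFunSnd φ b l p) p.2 := by
  have hline : HasDerivWithinAt (fun t => (p.1, t)) ((0 : ℝ), (1 : ℝ)) univ p.2 :=
    (hasDerivWithinAt_const ..).prodMk (hasDerivWithinAt_id ..)
  simpa [Function.comp_def] using
    (hasFDerivWithinAt_valueFun hφ hφ0 hb hbl hp₁).comp_hasDerivWithinAt p.2 hline fun _ _ => hp₁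

theorem valueFun_of_snd_le (hφ0 : ∀ s ≤ l, φ s = 0) (hb : 0 < b) (hbl : b ≤ l) (hp₁ : p.1 ≤ 0)
    (hp₂ : p.2 ≤ l) : valueFun φ b l p = 0 := by
  rw [valueFun_of_mem_belowCurve hb hbl
    (mem_belowCurve_of_snd_le (hb.trans_le hbl).ne' hp₁ hp₂)]
  exact integral_eq_zero_of_eq_zero_of_le (fun s hs => by simp [hφ0 s hs]) hp₂

theorem valueFunFst_of_snd_le (hφl : φ l = 0) (hb : 0 < b) (hbl : b ≤ l) (hp₁ : p.1 ≤ 0)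
    (hp₂ : p.2 ≤ l) : valueFunFst φ b l p = 0 :=
  valueFunFst_of_mem_belowCurve hb hbl hφl
    (mem_belowCurve_of_snd_le (hb.trans_le hbl).ne' hp₁ hp₂)

theorem valueFunSnd_of_snd_le (hφ0 : ∀ s ≤ l, φ s = 0) (hb : 0 < b) (hbl : b ≤ l)
    (hp₁ : p.1 ≤ 0) (hp₂ : p.2 ≤ l) : valueFunSnd φ b l p = 0 := by
  rw [valueFunSnd_of_mem_belowCurve hb hbl (hφ0 l le_rfl)
    (mem_belowCurve_of_snd_le (hb.trans_le hbl).ne' hp₁ hp₂), hφ0 _ hp₂, zero_div]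

theorem valueFun_of_mem_belowCurve_of_ge (hφ : Continuous φ) (hφ1 : ∀ s, u ≤ s → φ s = 1)
    (hb : 0 < b) (hbl : b ≤ l) (hlu : l ≤ u) (hp : p ∈ belowCurve b l) (hup : u ≤ p.2) :
    valueFun φ b l p = log (p.2 / u) + ∫ t in 0..log (u / l), φ (u * exp (-t)) := by
  have hl : 0 < l := hb.trans_le hbl
  have hu : 0 < u := hl.trans_le hlu
  have hp₂ : 0 < p.2 := hu.trans_le hup
  rw [valueFun_of_mem_belowCurve_of_le hφ hb hbl hp (hlu.trans hup),
    integral_comp_mul_exp_neg_of_ge hφ hu hφ1 hup, integral_comp_mul_exp_neg hφ hp₂,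
    integral_comp_mul_exp_neg hφ hu, mul_exp_neg_log_div hp₂ hl, mul_exp_neg_log_div hp₂ hu,
    mul_exp_neg_log_div hu hl, neg_zero, exp_zero, mul_one]

theorem valueFun_of_mem_aboveCurve_of_ge (hφ : ContDiff ℝ 1 φ) (hφ0 : ∀ s ≤ l, φ s = 0)
    (hφ1 : ∀ s, u ≤ s → φ s = 1) (hl : 0 < l) (hu : 0 < u) (hp : p ∈ aboveCurve b l)
    (hup : u ≤ p.2) :
    valueFun φ b l p = log (p.2 / u) +
      (∫ t in log (p.2 / u)..hitTime b p, φ (p.2 * exp (-t))) +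
        b⁻¹ * ∫ s in l..hitLevel b p, φ s := by
  rw [valueFun_of_mem_aboveCurve hφ hφ0 hl hp,
    integral_comp_mul_exp_neg_of_ge hφ.continuous hu hφ1 hup]

theorem valueFun_of_mem_aboveCurve_upper (hφ : ContDiff ℝ 1 φ) (hφ0 : ∀ s ≤ l, φ s = 0)
    (hφ1 : ∀ s, u ≤ s → φ s = 1) (hb : 0 < b) (hbl : b ≤ l) (hlu : l ≤ u)
    (hp : p ∈ aboveCurve b u) (hp₁ : p.1 ≤ 0) :
    valueFun φ b l p = hitTime b p + b⁻¹ * (hitLevel b p - u) + b⁻¹ * ∫ s in l..u, φ s := by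
  have hl : 0 < l := hb.trans_le hbl
  have hu : 0 < u := hl.trans_le hlu
  have hp₂ : 0 < p.2 := hu.trans_le hp.1
  obtain ⟨hτ0, hτu, -⟩ := hitTime_spec hb (hbl.trans hlu) hp hp₁
  have hτlog : hitTime b p ≤ log (p.2 / u) := by
    rwa [le_log_iff_exp_le (div_pos hp₂ hu), le_div_iff₀' hu]
  rw [valueFun_of_mem_aboveCurve hφ hφ0 hl (aboveCurve_subset_aboveCurve hb hbl hlu hp),
    integral_comp_mul_exp_neg_of_le_log hu hφ1 hp₂ hτ0 hτlog,
    integral_eq_of_eq_one_of_ge hφ.continuous hφ1 (le_hitLevel hb (hbl.trans hlu) hp hp₁)]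
  ring

theorem valueFunFst_of_mem_aboveCurve_upper (hφ1 : ∀ s, u ≤ s → φ s = 1) (hb : 0 < b)
    (hbl : b ≤ l) (hlu : l ≤ u) (hp : p ∈ aboveCurve b u) (hp₁ : p.1 ≤ 0) :
    valueFunFst φ b l p = b⁻¹ * exp (-hitTime b p) := by
  rw [valueFunFst, indicator_of_mem (aboveCurve_subset_aboveCurve hb hbl hlu hp),
    hφ1 _ (le_hitLevel hb (hbl.trans hlu) hp hp₁), mul_one]

theorem valueFunSnd_of_mem_aboveCurve (hp : p ∈ aboveCurve b l) :
    valueFunSnd φ b l p = 1 / p.2 * (φ p.2 - φ (hitLevel b p)) +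
      φ (hitLevel b p) * b⁻¹ * exp (-hitTime b p) * (hitTime b p + 1) := by
  rw [valueFunSnd, indicator_of_mem hp]
  ring

theorem valueFunSnd_of_mem_aboveCurve_upper (hφ1 : ∀ s, u ≤ s → φ s = 1) (hb : 0 < b)
    (hbl : b ≤ l) (hlu : l ≤ u) (hp : p ∈ aboveCurve b u) (hp₁ : p.1 ≤ 0) :
    valueFunSnd φ b l p = b⁻¹ * exp (-hitTime b p) * (hitTime b p + 1) := by
  rw [valueFunSnd_of_mem_aboveCurve (aboveCurve_subset_aboveCurve hb hbl hlu hp), hφ1 _ hp.1,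
    hφ1 _ (le_hitLevel hb (hbl.trans hlu) hp hp₁)]
  ring

end ValueFun

section Scaling

variable {n : ℕ} {β κ x y ν η : ℝ}

theorem hitEq_iff : HitEq n β x y η ↔ hitStart (β / √n) y η = x := by
  have hcancel : exp η * exp (-η) = 1 := by rw [← exp_add, add_neg_cancel, exp_zero]
  have hfactor : β / √n - (x + β / √n) * exp (-η) - η * y * exp (-η) =
      (hitStart (β / √n) y η - x) * exp (-η) := by
    rw [hitStart]
    linear_combination (-(β / √n)) * hcancel
  rw [HitEq, hfactor, mul_eq_zero_iff_right (exp_ne_zero _), sub_eq_zero]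

theorem GammaSol.gammaCurve_eq (hκ : 0 < κ / √n) (h : GammaSol n β κ x ν η) :
    gammaCurve (β / √n) (κ / √n) ν = x := by
  obtain ⟨-, -, heq, hlevel⟩ := h
  have hη : log (ν / (κ / √n)) = η := by
    rw [← hlevel, exp_neg, ← div_eq_mul_inv, div_div_cancel₀, log_exp]
    rintro rfl
    simp [← hlevel] at hκ
  rw [gammaCurve, hη, ← hitEq_iff, HitEq]
  linarith

theorem GammaSol.mem_aboveCurve (hβ : 0 < β / √n) (hβκ : β / √n ≤ κ / √n)
    (h : GammaSol n β κ x ν η) (hy : ν ≤ y) : (x, y) ∈ aboveCurve (β / √n) (κ / √n) :=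
  mem_aboveCurve_of_le hβ hβκ h.1 (h.gammaCurve_eq (hβ.trans_le hβκ)) hy

theorem GammaSol.mem_belowCurve (hβ : 0 < β / √n) (hβκ : β / √n ≤ κ / √n)
    (h : GammaSol n β κ x ν η) (hy : y ≤ ν) : (x, y) ∈ belowCurve (β / √n) (κ / √n) :=
  mem_belowCurve_of_le hβ hβκ h.1 (h.gammaCurve_eq (hβ.trans_le hβκ)) hy

theorem eq_hitTime_of_minimal {t : ℝ} (hβ : 0 < β / √n) (hβκ : β / √n ≤ κ / √n)
    (ht : ∀ η, 0 ≤ η → HitEq n β x y η → (∀ η', 0 ≤ η' → HitEq n β x y η' → η ≤ η') → t = η)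
    (h : (x, y) ∈ aboveCurve (β / √n) (κ / √n)) (hx : x ≤ 0) : t = hitTime (β / √n) (x, y) := by
  obtain ⟨⟨hnonneg, heq⟩, hmin⟩ :=
    isLeast_hitTime hβ (aboveCurve_subset_aboveCurve hβ le_rfl hβκ h) hx
  exact ht _ hnonneg (hitEq_iff.2 heq) fun η h0 hη => hmin ⟨h0, hitEq_iff.1 hη⟩

end Scaling

theorem stmt13_general (n : ℕ) (hn : 1 ≤ n) (β κ1 κ2 : ℝ) (hβ : 0 < β) (hκ1 : β < κ1)
    (φ : ℝ → ℝ) (hφ : ContDiff ℝ 1 φ) (hφ0 : ∀ s ≤ κ1 / √n, φ s = 0)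
    (hφ1 : ∀ s, κ2 / √n ≤ s → φ s = 1) (νs1 νs2 : ℝ → ℝ)
    (hνs1 : ∀ x1 ≤ (0 : ℝ), ∃ η : ℝ, GammaSol n β κ1 x1 (νs1 x1) η)
    (hνs2 : ∀ x1 ≤ (0 : ℝ), ∃ η : ℝ, GammaSol n β κ2 x1 (νs2 x1) η)
    (tau : ℝ → ℝ → ℝ)
    (htau : ∀ x1 x2 η : ℝ, 0 ≤ η → HitEq n β x1 x2 η →
      (∀ η' : ℝ, 0 ≤ η' → HitEq n β x1 x2 η' → η ≤ η') → tau x1 x2 = η) :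
    ∃ F F1 F2 : ℝ → ℝ → ℝ,
      (∀ x1 ≤ (0 : ℝ), ∀ x2 : ℝ, 0 ≤ x2 → x2 ≤ κ1 / √n → F x1 x2 = 0) ∧
      (∀ x1 ≤ (0 : ℝ), ∀ x2 : ℝ, κ1 / √n ≤ x2 → x2 ≤ νs1 x1 → x2 ≤ κ2 / √n →
        F x1 x2 = ∫ t in (0 : ℝ)..log (√n * x2 / κ1), φ (x2 * exp (-t))) ∧
      (∀ x1 ≤ (0 : ℝ), ∀ x2 : ℝ, κ1 / √n ≤ x2 → x2 ≤ νs1 x1 → κ2 / √n ≤ x2 →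
        F x1 x2 = log (√n * x2 / κ2) +
          ∫ t in (0 : ℝ)..log (κ2 / κ1), φ (κ2 / √n * exp (-t))) ∧
      (∀ x1 ≤ (0 : ℝ), ∀ x2 : ℝ, νs1 x1 ≤ x2 → x2 ≤ νs2 x1 → x2 ≤ κ2 / √n →
        F x1 x2 = (∫ t in (0 : ℝ)..tau x1 x2, φ (x2 * exp (-t))) +
          √n / β * ∫ t in (κ1 / √n)..(x2 * exp (-tau x1 x2)), φ t) ∧
      (∀ x1 ≤ (0 : ℝ), ∀ x2 : ℝ, νs1 x1 ≤ x2 → x2 ≤ νs2 x1 → κ2 / √n ≤ x2 →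
        F x1 x2 = log (√n * x2 / κ2) +
          (∫ t in (log (√n * x2 / κ2))..tau x1 x2, φ (x2 * exp (-t))) +
          √n / β * ∫ t in (κ1 / √n)..(x2 * exp (-tau x1 x2)), φ t) ∧
      (∀ x1 ≤ (0 : ℝ), ∀ x2 : ℝ, νs2 x1 ≤ x2 →
        F x1 x2 = tau x1 x2 + √n / β * (x2 * exp (-tau x1 x2) - κ2 / √n) +
          √n / β * ∫ t in (κ1 / √n)..(κ2 / √n), φ t) ∧
      ContDiffOn ℝ 2 (fun p : ℝ × ℝ => F p.1 p.2) (Iic (0 : ℝ) ×ˢ Ici (0 : ℝ)) ∧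
      (∀ x1 ≤ (0 : ℝ), ∀ x2 : ℝ, 0 ≤ x2 →
        HasDerivWithinAt (fun t => F t x2) (F1 x1 x2) (Iic 0) x1 ∧
          HasDerivWithinAt (fun t => F x1 t) (F2 x1 x2) (Ici 0) x2) ∧
      (∀ x1 ≤ (0 : ℝ), ∀ x2 : ℝ, 0 ≤ x2 → x2 ≤ κ1 / √n → F1 x1 x2 = 0) ∧
      (∀ x1 ≤ (0 : ℝ), ∀ x2 : ℝ, κ1 / √n ≤ x2 → x2 ≤ νs1 x1 → F1 x1 x2 = 0) ∧
      (∀ x1 ≤ (0 : ℝ), ∀ x2 : ℝ, νs1 x1 ≤ x2 → x2 ≤ νs2 x1 →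
        F1 x1 x2 = √n / β * φ (x2 * exp (-tau x1 x2)) * exp (-tau x1 x2)) ∧
      (∀ x1 ≤ (0 : ℝ), ∀ x2 : ℝ, νs2 x1 ≤ x2 → F1 x1 x2 = √n / β * exp (-tau x1 x2)) ∧
      (∀ x1 ≤ (0 : ℝ), ∀ x2 : ℝ, 0 ≤ x2 → x2 ≤ κ1 / √n → F2 x1 x2 = 0) ∧
      (∀ x1 ≤ (0 : ℝ), ∀ x2 : ℝ, κ1 / √n ≤ x2 → x2 ≤ νs1 x1 → F2 x1 x2 = φ x2 / x2) ∧
      (∀ x1 ≤ (0 : ℝ), ∀ x2 : ℝ, νs1 x1 ≤ x2 → x2 ≤ νs2 x1 →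
        F2 x1 x2 = 1 / x2 * (φ x2 - φ (x2 * exp (-tau x1 x2))) +
          φ (x2 * exp (-tau x1 x2)) * (√n / β) * exp (-tau x1 x2) * (tau x1 x2 + 1)) ∧
      (∀ x1 ≤ (0 : ℝ), ∀ x2 : ℝ, νs2 x1 ≤ x2 →
        F2 x1 x2 = √n / β * exp (-tau x1 x2) * (tau x1 x2 + 1)) := by
  have hr : 0 < √(n : ℝ) := sqrt_pos.2 (Nat.cast_pos.2 hn)
  rw [← inv_div β √n, ← div_div_div_cancel_right₀ hr.ne' κ2 κ1]
  simp only [mul_comm √(n : ℝ), ← div_div_eq_mul_div]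
  set b := β / √n
  set l := κ1 / √n
  set u := κ2 / √n
  have hb : 0 < b := div_pos hβ hr
  have hbl : b < l := div_lt_div_of_pos_right hκ1 hr
  have hl : 0 < l := hb.trans hbl
  have hφl : φ l = 0 := hφ0 l le_rfl
  have hlu : l ≤ u := le_of_not_gt fun h => by simpa [hφl] using hφ1 l h.le
  have hbu : b ≤ u := hbl.le.trans hlu
  have hS₁ {x y} (hx : x ≤ 0) (hy : y ≤ νs1 x) : (x, y) ∈ belowCurve b l :=
    (hνs1 x hx).choose_spec.mem_belowCurve hb hbl.le hy
  have hS₂ {x y} (hx : x ≤ 0) (hy : νs1 x ≤ y) : (x, y) ∈ aboveCurve b l :=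
    (hνs1 x hx).choose_spec.mem_aboveCurve hb hbl.le hy
  have hS₃ {x y} (hx : x ≤ 0) (hy : νs2 x ≤ y) : (x, y) ∈ aboveCurve b u :=
    (hνs2 x hx).choose_spec.mem_aboveCurve hb hbu hy
  have hτ₂ {x y} (hx : x ≤ 0) (hy : νs1 x ≤ y) : tau x y = hitTime b (x, y) :=
    eq_hitTime_of_minimal hb hbl.le (htau x y) (hS₂ hx hy) hx
  have hτ₃ {x y} (hx : x ≤ 0) (hy : νs2 x ≤ y) : tau x y = hitTime b (x, y) :=
    eq_hitTime_of_minimal hb hbu (htau x y) (hS₃ hx hy) hx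
  exact ⟨fun x y => valueFun φ b l (x, y), fun x y => valueFunFst φ b l (x, y),
    fun x y => valueFunSnd φ b l (x, y),
    fun x hx y _ hy => valueFun_of_snd_le hφ0 hb hbl.le hx hy,
    fun x hx y hly hy _ => valueFun_of_mem_belowCurve_of_le hφ.continuous hb hbl.le (hS₁ hx hy) hly,
    fun x hx y _ hy => valueFun_of_mem_belowCurve_of_ge hφ.continuous hφ1 hb hbl.le hlu (hS₁ hx hy),
    fun x hx y hy _ _ => hτ₂ hx hy ▸ valueFun_of_mem_aboveCurve hφ hφ0 hl (hS₂ hx hy),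
    fun x hx y hy _ => hτ₂ hx hy ▸
      valueFun_of_mem_aboveCurve_of_ge hφ hφ0 hφ1 hl (hl.trans_le hlu) (hS₂ hx hy),
    fun x hx y hy => hτ₃ hx hy ▸
      valueFun_of_mem_aboveCurve_upper hφ hφ0 hφ1 hb hbl.le hlu (hS₃ hx hy) hx,
    (contDiffOn_valueFun hφ hφ0 hb hbl).mono fun p hp => hp.1,
    fun x hx y _ => ⟨hasDerivWithinAt_valueFun_fst (p := (x, y)) hφ hφ0 hb hbl hx,
      (hasDerivAt_valueFun_snd (p := (x, y)) hφ hφ0 hb hbl hx).hasDerivWithinAt⟩,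
    fun x hx y _ hy => valueFunFst_of_snd_le hφl hb hbl.le hx hy,
    fun x hx y _ hy => valueFunFst_of_mem_belowCurve hb hbl.le hφl (hS₁ hx hy),
    fun x hx y hy _ => hτ₂ hx hy ▸ indicator_of_mem (hS₂ hx hy) _,
    fun x hx y hy => hτ₃ hx hy ▸
      valueFunFst_of_mem_aboveCurve_upper hφ1 hb hbl.le hlu (hS₃ hx hy) hx,
    fun x hx y _ hy => valueFunSnd_of_snd_le hφ0 hb hbl.le hx hy,
    fun x hx y _ hy => valueFunSnd_of_mem_belowCurve hb hbl.le hφl (hS₁ hx hy),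
    fun x hx y hy _ => hτ₂ hx hy ▸ valueFunSnd_of_mem_aboveCurve (hS₂ hx hy),
    fun x hx y hy => hτ₃ hx hy ▸
      valueFunSnd_of_mem_aboveCurve_upper hφ1 hb hbl.le hlu (hS₃ hx hy) hx⟩

/-- Lemma `phi2`.  Fix `β < κ₁ < κ₂`, let `φ = φ^{(κ₁/√n, κ₂/√n)}`, let
`ν*_{κ₁}, ν*_{κ₂}` parametrize the curves `Γ^{(κ₁)}, Γ^{(κ₂)}` delimiting the regions
`S₀, S₁, S₂, S₃`, and let `τ(x)` be the smallest nonnegative solution of the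
hitting-time equation wherever it exists.  There is a function `F = f^{(2)}` on `Ω`
agreeing with all the prescribed piecewise formulas (so the pieces agree on the
overlaps of the regions), belonging to `C²(Ω)`, whose first-order (one-sided) partial
derivatives `F1, F2` are given on `S₀, S₁, S₂, S₃` by the stated formulas. -/
theorem stmt13 (n : ℕ) (hn : 1 ≤ n) (β κ1 κ2 : ℝ) (hβ : 0 < β)
    (hκ1 : β < κ1) (hκ12 : κ1 < κ2)
    (νs1 νs2 : ℝ → ℝ)
    (hνs1 : ∀ x1 ≤ (0 : ℝ), ∃ η : ℝ, GammaSol n β κ1 x1 (νs1 x1) η)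
    (hνs2 : ∀ x1 ≤ (0 : ℝ), ∃ η : ℝ, GammaSol n β κ2 x1 (νs2 x1) η)
    (tau : ℝ → ℝ → ℝ)
    (htau : ∀ x1 x2 η : ℝ, 0 ≤ η → HitEq n β x1 x2 η →
      (∀ η' : ℝ, 0 ≤ η' → HitEq n β x1 x2 η' → η ≤ η') → tau x1 x2 = η) :
    ∃ F F1 F2 : ℝ → ℝ → ℝ,
      -- defining pieces (their simultaneous validity encodes well-definedness)
      -- on S₀:
      (∀ x1 ≤ (0 : ℝ), ∀ x2 : ℝ, 0 ≤ x2 → x2 ≤ κ1 / Real.sqrt n →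
        F x1 x2 = 0) ∧
      -- on S₁ with x₂ ≤ κ₂/√n:
      (∀ x1 ≤ (0 : ℝ), ∀ x2 : ℝ, κ1 / Real.sqrt n ≤ x2 → x2 ≤ νs1 x1 →
        x2 ≤ κ2 / Real.sqrt n →
        F x1 x2 = ∫ t in (0 : ℝ)..Real.log (Real.sqrt n * x2 / κ1),
          phiSm (κ1 / Real.sqrt n) (κ2 / Real.sqrt n) (x2 * Real.exp (-t))) ∧
      -- on S₁ with x₂ ≥ κ₂/√n:
      (∀ x1 ≤ (0 : ℝ), ∀ x2 : ℝ, κ1 / Real.sqrt n ≤ x2 → x2 ≤ νs1 x1 →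
        κ2 / Real.sqrt n ≤ x2 →
        F x1 x2 = Real.log (Real.sqrt n * x2 / κ2) +
          ∫ t in (0 : ℝ)..Real.log (κ2 / κ1),
            phiSm (κ1 / Real.sqrt n) (κ2 / Real.sqrt n)
              (κ2 / Real.sqrt n * Real.exp (-t))) ∧
      -- on S₂ with x₂ ≤ κ₂/√n:
      (∀ x1 ≤ (0 : ℝ), ∀ x2 : ℝ, νs1 x1 ≤ x2 → x2 ≤ νs2 x1 →
        x2 ≤ κ2 / Real.sqrt n →
        F x1 x2 = (∫ t in (0 : ℝ)..tau x1 x2,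
            phiSm (κ1 / Real.sqrt n) (κ2 / Real.sqrt n) (x2 * Real.exp (-t))) +
          Real.sqrt n / β *
            ∫ t in (κ1 / Real.sqrt n)..(x2 * Real.exp (-tau x1 x2)),
              phiSm (κ1 / Real.sqrt n) (κ2 / Real.sqrt n) t) ∧
      -- on S₂ with x₂ ≥ κ₂/√n:
      (∀ x1 ≤ (0 : ℝ), ∀ x2 : ℝ, νs1 x1 ≤ x2 → x2 ≤ νs2 x1 →
        κ2 / Real.sqrt n ≤ x2 →
        F x1 x2 = Real.log (Real.sqrt n * x2 / κ2) +
          (∫ t in (Real.log (Real.sqrt n * x2 / κ2))..tau x1 x2,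
            phiSm (κ1 / Real.sqrt n) (κ2 / Real.sqrt n) (x2 * Real.exp (-t))) +
          Real.sqrt n / β *
            ∫ t in (κ1 / Real.sqrt n)..(x2 * Real.exp (-tau x1 x2)),
              phiSm (κ1 / Real.sqrt n) (κ2 / Real.sqrt n) t) ∧
      -- on S₃:
      (∀ x1 ≤ (0 : ℝ), ∀ x2 : ℝ, νs2 x1 ≤ x2 →
        F x1 x2 = tau x1 x2 +
          Real.sqrt n / β * (x2 * Real.exp (-tau x1 x2) - κ2 / Real.sqrt n) +
          Real.sqrt n / β *
            ∫ t in (κ1 / Real.sqrt n)..(κ2 / Real.sqrt n),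
              phiSm (κ1 / Real.sqrt n) (κ2 / Real.sqrt n) t) ∧
      -- F ∈ C²(Ω)
      ContDiffOn ℝ 2 (fun p : ℝ × ℝ => F p.1 p.2)
        (Set.Iic (0 : ℝ) ×ˢ Set.Ici (0 : ℝ)) ∧
      -- F1, F2 are the first-order (one-sided) partial derivatives of F on Ω
      (∀ x1 ≤ (0 : ℝ), ∀ x2 : ℝ, 0 ≤ x2 →
        HasDerivWithinAt (fun t => F t x2) (F1 x1 x2) (Set.Iic 0) x1 ∧
          HasDerivWithinAt (fun t => F x1 t) (F2 x1 x2) (Set.Ici 0) x2) ∧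
      -- formulas for F1
      (∀ x1 ≤ (0 : ℝ), ∀ x2 : ℝ, 0 ≤ x2 → x2 ≤ κ1 / Real.sqrt n →
        F1 x1 x2 = 0) ∧
      (∀ x1 ≤ (0 : ℝ), ∀ x2 : ℝ, κ1 / Real.sqrt n ≤ x2 → x2 ≤ νs1 x1 →
        F1 x1 x2 = 0) ∧
      (∀ x1 ≤ (0 : ℝ), ∀ x2 : ℝ, νs1 x1 ≤ x2 → x2 ≤ νs2 x1 →
        F1 x1 x2 = Real.sqrt n / β *
          phiSm (κ1 / Real.sqrt n) (κ2 / Real.sqrt n)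
            (x2 * Real.exp (-tau x1 x2)) * Real.exp (-tau x1 x2)) ∧
      (∀ x1 ≤ (0 : ℝ), ∀ x2 : ℝ, νs2 x1 ≤ x2 →
        F1 x1 x2 = Real.sqrt n / β * Real.exp (-tau x1 x2)) ∧
      -- formulas for F2
      (∀ x1 ≤ (0 : ℝ), ∀ x2 : ℝ, 0 ≤ x2 → x2 ≤ κ1 / Real.sqrt n →
        F2 x1 x2 = 0) ∧
      (∀ x1 ≤ (0 : ℝ), ∀ x2 : ℝ, κ1 / Real.sqrt n ≤ x2 → x2 ≤ νs1 x1 →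
        F2 x1 x2 = phiSm (κ1 / Real.sqrt n) (κ2 / Real.sqrt n) x2 / x2) ∧
      (∀ x1 ≤ (0 : ℝ), ∀ x2 : ℝ, νs1 x1 ≤ x2 → x2 ≤ νs2 x1 →
        F2 x1 x2 = 1 / x2 *
            (phiSm (κ1 / Real.sqrt n) (κ2 / Real.sqrt n) x2 -
              phiSm (κ1 / Real.sqrt n) (κ2 / Real.sqrt n)
                (x2 * Real.exp (-tau x1 x2))) +
          phiSm (κ1 / Real.sqrt n) (κ2 / Real.sqrt n)
              (x2 * Real.exp (-tau x1 x2)) *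
            (Real.sqrt n / β) * Real.exp (-tau x1 x2) * (tau x1 x2 + 1)) ∧
      (∀ x1 ≤ (0 : ℝ), ∀ x2 : ℝ, νs2 x1 ≤ x2 →
        F2 x1 x2 = Real.sqrt n / β * Real.exp (-tau x1 x2) * (tau x1 x2 + 1)) := by
  have hlu : κ1 / √n < κ2 / √n :=
    div_lt_div_of_pos_right hκ12 (Real.sqrt_pos.2 (Nat.cast_pos.2 hn))
  exact stmt13_general n hn β κ1 κ2 hβ hκ1 _ (contDiff_one_phiSm hlu) (fun _ => phiSm_of_le)
    (fun _ => phiSm_of_ge hlu) νs1 νs2 hνs1 hνs2 tau htau
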